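/- arXiv:2507.03692 — 5 statements merged into one kernel-verified Lean document; each statement's English description precedes it below -/
import Mathlib

section
/- Let k ≥ 1, let ε ≥ 0, and let D0 and D1 be probability distributions on {0,1}^n that are ε-almost k-wise equal. Then for every adaptive k-query strategy on {0,1}^n with transcript map Z, and for every string z ∈ {0,1}^k, one has (1 − ε)·Pr_{x∼D1}[Z(x) = z] ≤ Pr_{x∼D0}[Z(x) = z] ≤ (1 + ε)·Pr_{x∼D1}[Z(x) = z]. -/
/-- The real value of a bit. -/
def bval (b : Bool) : ℝ := if b then 1 else 0

/-- `D` is a probability distribution on `{0,1}^n`. -/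
def IsDistribution {n : ℕ} (D : (Fin n → Bool) → ℝ) : Prop :=
  (∀ x, 0 ≤ D x) ∧ ∑ x, D x = 1

/-- Expectation of `g` under the distribution `D`. -/
def expect {n : ℕ} (D : (Fin n → Bool) → ℝ) (g : (Fin n → Bool) → ℝ) : ℝ :=
  ∑ x, D x * g x

/-- A `k`-term is described by a list of `k` pairs `(i, b)`; the factor corresponding
to `(i, true)` is `z i` and the one corresponding to `(i, false)` is `1 - z i`.
On Boolean inputs, each factor is the indicator that `z i = b`. -/
def termEval {n : ℕ} (L : List (Fin n × Bool)) (z : Fin n → Bool) : ℝ :=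
  (L.map (fun p => if z p.1 = p.2 then (1 : ℝ) else 0)).prod

/-- `D0` and `D1` are `ε`-almost `k`-wise equal:
for every `k`-term `C`, `(1 - ε) E_{D1}[C] ≤ E_{D0}[C] ≤ (1 + ε) E_{D1}[C]`. -/
def AlmostKWiseEqual {n : ℕ} (k : ℕ) (ε : ℝ) (D0 D1 : (Fin n → Bool) → ℝ) : Prop :=
  ∀ L : List (Fin n × Bool), L.length = k →
    (1 - ε) * expect D1 (termEval L) ≤ expect D0 (termEval L) ∧
    expect D0 (termEval L) ≤ (1 + ε) * expect D1 (termEval L)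

/-- `Z` is the transcript map of the adaptive `k`-query strategy `q`:
`Z x j = x (q j (Z x ↾ {0,…,j-1}))`. -/
def IsTranscript {n k : ℕ} (q : (j : Fin k) → (Fin j → Bool) → Fin n)
    (Z : (Fin n → Bool) → Fin k → Bool) : Prop :=
  ∀ x j, Z x j = x (q j (fun i => Z x ⟨i.1, i.2.trans j.2⟩))

/-- If `D0, D1` are `ε`-almost `k`-wise equal, then for every adaptive
`k`-query strategy with transcript map `Z` and every `z ∈ {0,1}^k`,
`(1-ε)·Pr_{x∼D1}[Z x = z] ≤ Pr_{x∼D0}[Z x = z] ≤ (1+ε)·Pr_{x∼D1}[Z x = z]`. -/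
theorem almost_kwise_transcript_bound {n k : ℕ} (hk : 1 ≤ k) (ε : ℝ) (hε : 0 ≤ ε)
    (D0 D1 : (Fin n → Bool) → ℝ)
    (hD0 : IsDistribution D0) (hD1 : IsDistribution D1)
    (hD : AlmostKWiseEqual k ε D0 D1)
    (q : (j : Fin k) → (Fin j → Bool) → Fin n)
    (Z : (Fin n → Bool) → Fin k → Bool) (hZ : IsTranscript q Z)
    (z : Fin k → Bool) :
    (1 - ε) * (∑ x, D1 x * (if Z x = z then 1 else 0)) ≤
      (∑ x, D0 x * (if Z x = z then 1 else 0)) ∧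
    (∑ x, D0 x * (if Z x = z then 1 else 0)) ≤
      (1 + ε) * (∑ x, D1 x * (if Z x = z then 1 else 0)) := by
  have key : ∀ x, termEval (List.ofFn (fun j : Fin k =>
      (q j (fun i => z ⟨i.1, i.2.trans j.2⟩), z j))) x = if Z x = z then 1 else 0 := by
    intro x
    unfold termEval
    rw [List.map_ofFn, List.prod_ofFn]
    simp only [Function.comp_apply]
    rw [Finset.prod_ite_zero]
    simp only [Finset.prod_const_one, Finset.mem_univ, true_imp_iff, forall_true_left]
    congr 1
    apply propext
    constructor
    · intro h
      have main : ∀ (m : ℕ) (hm : m < k), Z x ⟨m, hm⟩ = z ⟨m, hm⟩ := by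
        intro m
        induction m using Nat.strong_induction_on with
        | _ m ih =>
          intro hm
          rw [hZ x ⟨m, hm⟩, ← h ⟨m, hm⟩]
          congr 2
          funext i
          exact ih i.1 i.2 _
      funext j
      exact main j.1 j.2
    · intro h j
      rw [← h]
      exact (hZ x j).symm
  have h := hD (List.ofFn (fun j : Fin k =>
      (q j (fun i => z ⟨i.1, i.2.trans j.2⟩), z j))) (by simp)
  simpa only [expect, key] using h
end

section
/- Let k ≥ 1, let 0 ≤ ε < 1/3, and let D0 and D1 be probability distributions on {0,1}^n that are ε-almost k-wise equal. Fix an adaptive k-query strategy on {0,1}^n with transcript map Z. For each z ∈ {0,1}^k let ρ_z be an N×N density matrix, and let Π_o and Π_p be N×N projections with Π_o ≤ Π_p. For b ∈ {0,1} and s ∈ {o, p}, set p_{b,s} = Σ_{z ∈ {0,1}^k} Pr_{x∼D_b}[Z(x) = z] · Tr(Π_s ρ_z), and assume p_{0,p} > 0 and p_{1,p} > 0. Then it is not the case that both p_{0,o}/p_{0,p} ≤ 1/3 and p_{1,o}/p_{1,p} ≥ 2/3. (Consequently, no algorithm that makes k classical queries to the input and then postselects via Π_p and accepts via Π_o can distinguish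 D0 from D1 with bounded error.) -/
open ComplexOrder

/-- `p_{D,s} = Σ_z Pr_{x∼D}[Z(x) = z] · Tr(Π_s ρ_z)`, the (real) probability that the
projection `Ps` succeeds on the state produced after the classical queries, when the
input is drawn from `D`. -/
noncomputable def postProb {n k N : ℕ} (Z : (Fin n → Bool) → Fin k → Bool)
    (ρ : (Fin k → Bool) → Matrix (Fin N) (Fin N) ℂ)
    (D : (Fin n → Bool) → ℝ) (Ps : Matrix (Fin N) (Fin N) ℂ) : ℝ :=
  ∑ z : Fin k → Bool, (∑ x, D x * (if Z x = z then 1 else 0)) * ((Ps * ρ z).trace).re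

/-- On inputs `x`, the term read off from a candidate transcript `z` is the indicator of `Z x = z`. -/
theorem termEval_transcript {n k : ℕ} (q : (j : Fin k) → (Fin j → Bool) → Fin n)
    (Z : (Fin n → Bool) → Fin k → Bool) (hZ : IsTranscript q Z) (z : Fin k → Bool)
    (x : Fin n → Bool) :
    termEval (List.ofFn (fun j : Fin k =>
      (q j (fun i => z ⟨i.1, i.2.trans j.2⟩), z j))) x = if Z x = z then 1 else 0 := by
  have key : Z x = z ↔ ∀ j : Fin k, x (q j (fun i => z ⟨i.1, i.2.trans j.2⟩)) = z j := by
    constructor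
    · rintro rfl j
      exact (hZ x j).symm
    · intro h
      have aux : ∀ m : ℕ, ∀ hm : m < k, Z x ⟨m, hm⟩ = z ⟨m, hm⟩ := by
        intro m
        induction m using Nat.strong_induction_on with
        | _ m ih =>
          intro hm
          rw [hZ x ⟨m, hm⟩, ← h ⟨m, hm⟩]
          congr 2
          funext i
          exact ih i.1 i.2 _
      funext j
      exact aux j.1 j.2
  unfold termEval
  rw [List.map_ofFn, List.prod_ofFn]
  simp only [Function.comp_apply]
  rw [Finset.prod_boole]
  simp [key]

theorem trace_proj_nonneg {N : ℕ} (P R : Matrix (Fin N) (Fin N) ℂ)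
    (hP : P.IsHermitian ∧ P * P = P) (hR : R.PosSemidef) : 0 ≤ ((P * R).trace).re := by
  have h1 : (P * R).trace = (P * R * P.conjTranspose).trace := by
    rw [hP.1.eq, Matrix.trace_mul_comm (P * R) P, ← Matrix.mul_assoc, hP.2]
  rw [h1]
  have := (hR.mul_mul_conjTranspose_same P).trace_nonneg
  exact (Complex.le_def.1 this).1

/-- No algorithm making `k` classical (adaptive) queries and then
postselecting via `Pp` and accepting via `Po` can distinguish two `ε`-almost `k`-wise
equal distributions with bounded error, when `0 ≤ ε < 1/3`. -/
theorem no_classical_query_postselection_distinguisher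
    {n k N : ℕ} (hk : 1 ≤ k) (ε : ℝ) (hε0 : 0 ≤ ε) (hε : ε < 1/3)
    (D0 D1 : (Fin n → Bool) → ℝ)
    (hD0 : IsDistribution D0) (hD1 : IsDistribution D1)
    (hD : AlmostKWiseEqual k ε D0 D1)
    (q : (j : Fin k) → (Fin j → Bool) → Fin n)
    (Z : (Fin n → Bool) → Fin k → Bool) (hZ : IsTranscript q Z)
    (ρ : (Fin k → Bool) → Matrix (Fin N) (Fin N) ℂ)
    (hρ : ∀ z, (ρ z).PosSemidef ∧ (ρ z).trace = 1)
    (Po Pp : Matrix (Fin N) (Fin N) ℂ)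
    (hPo : Po.IsHermitian ∧ Po * Po = Po)
    (hPp : Pp.IsHermitian ∧ Pp * Pp = Pp)
    (hle : (Pp - Po).PosSemidef)
    (h0p : 0 < postProb Z ρ D0 Pp) (h1p : 0 < postProb Z ρ D1 Pp) :
    ¬(postProb Z ρ D0 Po / postProb Z ρ D0 Pp ≤ 1/3 ∧
      2/3 ≤ postProb Z ρ D1 Po / postProb Z ρ D1 Pp) := by
  rintro ⟨h0, h1⟩
  have hz : ∀ z : Fin k → Bool,
      (1 - ε) * (∑ x, D1 x * (if Z x = z then 1 else 0)) ≤
        ∑ x, D0 x * (if Z x = z then 1 else 0) ∧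
      (∑ x, D0 x * (if Z x = z then 1 else 0)) ≤
        (1 + ε) * (∑ x, D1 x * (if Z x = z then 1 else 0)) := by
    intro z
    have h := hD (List.ofFn (fun j : Fin k =>
      (q j (fun i => z ⟨i.1, i.2.trans j.2⟩), z j))) (by simp)
    simpa only [expect, termEval_transcript q Z hZ z] using h
  have ho : (1 - ε) * postProb Z ρ D1 Po ≤ postProb Z ρ D0 Po := by
    unfold postProb
    rw [Finset.mul_sum]
    refine Finset.sum_le_sum fun z _ => ?_
    rw [← mul_assoc]
    exact mul_le_mul_of_nonneg_right (hz z).1 (trace_proj_nonneg _ _ hPo (hρ z).1)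
  have hp : postProb Z ρ D0 Pp ≤ (1 + ε) * postProb Z ρ D1 Pp := by
    unfold postProb
    rw [Finset.mul_sum]
    refine Finset.sum_le_sum fun z _ => ?_
    rw [← mul_assoc]
    exact mul_le_mul_of_nonneg_right (hz z).2 (trace_proj_nonneg _ _ hPp (hρ z).1)
  rw [div_le_iff₀ h0p] at h0
  rw [le_div_iff₀ h1p] at h1
  have h2 : (1 - ε) * (2/3 * postProb Z ρ D1 Pp) ≤ (1 - ε) * postProb Z ρ D1 Po :=
    mul_le_mul_of_nonneg_left h1 (by linarith)
  have h3 : 0 < (1/3 - ε) * postProb Z ρ D1 Pp := mul_pos (by linarith) h1p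
  nlinarith
end

section
/- For every function f : {0,1}^n → {0,1}, every natural number d, and every δ ∈ [0, 1/2), the rational tree degree of the adaptive construction satisfies rtdeg_{(d+1)δ}(Ada(f, d)) ≤ (d + 1) · rdeg_δ(f). -/
/-- Evaluation of a real multivariate polynomial at a Boolean point. -/
noncomputable def evalB {m : ℕ} (P : MvPolynomial (Fin m) ℝ) (x : Fin m → Bool) : ℝ :=
  MvPolynomial.eval (fun i => bval (x i)) P

/-- Clamp a real number to `[0,1]`. -/
noncomputable def clamp (r : ℝ) : ℝ := max 0 (min 1 r)

/-- The rational function `P/Q` (with `Q` nonvanishing on the Boolean cube)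
`ε`-approximates `f`. -/
def IsRationalApprox {m : ℕ} (ε : ℝ) (f : (Fin m → Bool) → Bool)
    (P Q : MvPolynomial (Fin m) ℝ) : Prop :=
  (∀ x, evalB Q x ≠ 0) ∧ ∀ x, |evalB P x / evalB Q x - bval (f x)| ≤ ε

/-- The rational degree `rdeg_ε(f)`: the minimum of `max(deg P, deg Q)` over rational
functions `P/Q` that `ε`-approximate `f`. -/
noncomputable def rdeg {m : ℕ} (ε : ℝ) (f : (Fin m → Bool) → Bool) : ℕ :=
  sInf {d | ∃ P Q : MvPolynomial (Fin m) ℝ,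
    IsRationalApprox ε f P Q ∧ max P.totalDegree Q.totalDegree ≤ d}

/-- A rational tree: a finite binary tree each of whose nodes is labeled by a rational
function `P/Q` on `{0,1}^m`. -/
inductive RTree (m : ℕ) where
  | leaf (P Q : MvPolynomial (Fin m) ℝ) : RTree m
  | node (P Q : MvPolynomial (Fin m) ℝ) (t0 t1 : RTree m) : RTree m

namespace RTree

/-- All denominators in the tree are nonvanishing on the Boolean cube. -/
def Valid {m : ℕ} : RTree m → Prop
  | leaf _ Q => ∀ x, evalB Q x ≠ 0
  | node _ Q t0 t1 => (∀ x, evalB Q x ≠ 0) ∧ t0.Valid ∧ t1.Valid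

/-- `T.prob x`: the probability that evaluating the rational tree `T` on input `x`
outputs `1`.  At each node one flips a coin with bias the clamped value of the label;
at a leaf the coin value is output, otherwise one moves to the child indexed by it. -/
noncomputable def prob {m : ℕ} : RTree m → (Fin m → Bool) → ℝ
  | leaf P Q, x => clamp (evalB P x / evalB Q x)
  | node P Q t0 t1, x =>
      (1 - clamp (evalB P x / evalB Q x)) * t0.prob x
        + clamp (evalB P x / evalB Q x) * t1.prob x

/-- The degree of a rational tree: the maximum over root-to-leaf paths of the sum of
the degrees of the labels along the path. -/
def deg {m : ℕ} : RTree m → ℕ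
  | leaf P Q => max P.totalDegree Q.totalDegree
  | node P Q t0 t1 => max P.totalDegree Q.totalDegree + max t0.deg t1.deg

end RTree

/-- The rational tree degree `rtdeg_ε(f)`: the minimum degree of a (valid) rational tree
`ε`-approximating `f`. -/
noncomputable def rtdeg {m : ℕ} (ε : ℝ) (f : (Fin m → Bool) → Bool) : ℕ :=
  sInf {d | ∃ T : RTree m, T.Valid ∧ (∀ x, |T.prob x - bval (f x)| ≤ ε) ∧ T.deg ≤ d}

lemma adaSize_succ (n d : ℕ) :
    n * (2 ^ (d + 1 + 1) - 1) = n + (n * (2 ^ (d + 1) - 1) + n * (2 ^ (d + 1) - 1)) := by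
  obtain ⟨p, hp⟩ : ∃ p, 2 ^ (d + 1) = p + 1 :=
    ⟨2 ^ (d + 1) - 1, by have := Nat.one_le_two_pow (n := d + 1); omega⟩
  have h2 : 2 ^ (d + 1 + 1) = 2 * (p + 1) := by rw [pow_succ, hp]; ring
  rw [h2, hp]
  have h3 : 2 * (p + 1) - 1 = 2 * p + 1 := by omega
  have h4 : p + 1 - 1 = p := by omega
  rw [h3, h4]; ring

/-- The adaptive construction `Ada(f, d)`, a Boolean function on `n·(2^{d+1} - 1)` bits:
`Ada(f,0) = f` and `Ada(f,d)(x,y,z) = Ada(f,d-1)(y)` if `f x = 0`, `= Ada(f,d-1)(z)` if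
`f x = 1`. -/
def ada {n : ℕ} (f : (Fin n → Bool) → Bool) :
    (d : ℕ) → (Fin (n * (2 ^ (d + 1) - 1)) → Bool) → Bool
  | 0 => fun w => f (fun i => w ⟨i.1, by simp⟩)
  | d + 1 => fun w =>
      if f (fun i => w ⟨i.1, by have := adaSize_succ n d; have := i.2; omega⟩)
      then ada f d (fun j =>
        w ⟨n + n * (2 ^ (d + 1) - 1) + j.1, by have := adaSize_succ n d; have := j.2; omega⟩)
      else ada f d (fun j =>
        w ⟨n + j.1, by have := adaSize_succ n d; have := j.2; omega⟩)

/-- The `n`-bit AND function. -/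
def ANDb (n : ℕ) : (Fin n → Bool) → Bool := fun x => decide (∀ i, x i = true)

lemma evalB_rename {m k : ℕ} (g : Fin m → Fin k) (P : MvPolynomial (Fin m) ℝ)
    (w : Fin k → Bool) :
    evalB (MvPolynomial.rename g P) w = evalB P (fun i => w (g i)) := by
  unfold evalB
  rw [MvPolynomial.eval_rename]
  rfl

/-- Reindex the variables of a tree. -/
noncomputable def RTree.reindex {m k : ℕ} (g : Fin m → Fin k) : RTree m → RTree k
  | leaf P Q => leaf (MvPolynomial.rename g P) (MvPolynomial.rename g Q)
  | node P Q t0 t1 => node (MvPolynomial.rename g P) (MvPolynomial.rename g Q)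
      (t0.reindex g) (t1.reindex g)

lemma RTree.reindex_valid {m k : ℕ} (g : Fin m → Fin k) (T : RTree m) (h : T.Valid) :
    (T.reindex g).Valid := by
  induction T with
  | leaf P Q => intro x; rw [evalB_rename]; exact h _
  | node P Q t0 t1 h0 h1 =>
    refine ⟨fun x => ?_, h0 h.2.1, h1 h.2.2⟩
    rw [evalB_rename]; exact h.1 _

lemma RTree.reindex_prob {m k : ℕ} (g : Fin m → Fin k) (T : RTree m) (w : Fin k → Bool) :
    (T.reindex g).prob w = T.prob (fun i => w (g i)) := by
  induction T with
  | leaf P Q => simp only [RTree.reindex, RTree.prob, evalB_rename]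
  | node P Q t0 t1 h0 h1 => simp only [RTree.reindex, RTree.prob, evalB_rename, h0, h1]

lemma RTree.reindex_deg {m k : ℕ} (g : Fin m → Fin k) (T : RTree m) :
    (T.reindex g).deg ≤ T.deg := by
  induction T with
  | leaf P Q =>
    exact max_le_max (MvPolynomial.totalDegree_rename_le _ _)
      (MvPolynomial.totalDegree_rename_le _ _)
  | node P Q t0 t1 h0 h1 =>
    exact add_le_add (max_le_max (MvPolynomial.totalDegree_rename_le _ _)
      (MvPolynomial.totalDegree_rename_le _ _)) (max_le_max h0 h1)

lemma clamp_nonneg (r : ℝ) : 0 ≤ clamp r := le_max_left _ _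

lemma clamp_le_one (r : ℝ) : clamp r ≤ 1 := max_le zero_le_one (min_le_left _ _)

lemma bval_cases (b : Bool) : bval b = 0 ∨ bval b = 1 := by
  cases b <;> simp [bval]

lemma clamp_approx (r : ℝ) (b : Bool) (δ : ℝ) (h : |r - bval b| ≤ δ) :
    |clamp r - bval b| ≤ δ := by
  rw [abs_le] at *
  unfold clamp
  rcases bval_cases b with hb | hb <;> rw [hb] at h ⊢ <;>
  rcases max_cases 0 (min 1 r) with h1 | h1 <;> rcases min_cases 1 r with h2 | h2 <;>
  constructor <;> linarith

lemma RTree.prob_mem {m : ℕ} (T : RTree m) (x : Fin m → Bool) :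
    0 ≤ T.prob x ∧ T.prob x ≤ 1 := by
  induction T with
  | leaf P Q => exact ⟨clamp_nonneg _, clamp_le_one _⟩
  | node P Q t0 t1 h0 h1 =>
    simp only [RTree.prob]
    have a := clamp_nonneg (evalB P x / evalB Q x)
    have b := clamp_le_one (evalB P x / evalB Q x)
    generalize clamp (evalB P x / evalB Q x) = c at *
    constructor
    · have := mul_nonneg (sub_nonneg.2 b) h0.1
      have := mul_nonneg a h1.1
      linarith
    · have := mul_le_mul_of_nonneg_left h0.2 (sub_nonneg.2 b)
      have := mul_le_mul_of_nonneg_left h1.2 a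
      linarith

/-- The mixing estimate. -/
lemma mix_bound (c a b F e δ : ℝ) (hc0 : 0 ≤ c) (hc1 : c ≤ 1) (hcd : c ≤ δ)
    (ha : |a - F| ≤ e) (hb : |b - F| ≤ 1) :
    |(1 - c) * a + c * b - F| ≤ e + δ := by
  have he : 0 ≤ e := (abs_nonneg _).trans ha
  have h : (1 - c) * a + c * b - F = (1 - c) * (a - F) + c * (b - F) := by ring
  rw [h]
  refine (abs_add_le _ _).trans ?_
  rw [abs_mul, abs_mul, abs_of_nonneg hc0, abs_of_nonneg (sub_nonneg.2 hc1)]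
  have := mul_le_mul_of_nonneg_left ha (sub_nonneg.2 hc1)
  have := mul_le_mul_of_nonneg_left hb hc0
  nlinarith

lemma RTree.prob_sub_bval {m : ℕ} (T : RTree m) (x : Fin m → Bool) (b : Bool) :
    |T.prob x - bval b| ≤ 1 := by
  have := T.prob_mem x
  rw [abs_le]
  rcases bval_cases b with hb | hb <;> rw [hb] <;> constructor <;> linarith

lemma ada_tree {n : ℕ} (f : (Fin n → Bool) → Bool) (δ : ℝ) (P Q : MvPolynomial (Fin n) ℝ)
    (hPQ : IsRationalApprox δ f P Q) (d : ℕ) :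
    ∃ T : RTree (n * (2 ^ (d + 1) - 1)), T.Valid ∧
      (∀ x, |T.prob x - bval (ada f d x)| ≤ ((d : ℝ) + 1) * δ) ∧
      T.deg ≤ (d + 1) * max P.totalDegree Q.totalDegree := by
  induction d with
  | zero =>
    let T : RTree n := .leaf P Q
    refine ⟨T.reindex (fun i => ⟨i.1, by simp⟩), T.reindex_valid _ hPQ.1, fun x => ?_, ?_⟩
    · rw [RTree.reindex_prob]
      have := clamp_approx _ _ _ (hPQ.2 (fun i => x ⟨i.1, by simp⟩))
      simpa [T, RTree.prob, ada] using this
    · refine (T.reindex_deg _).trans ?_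
      simp [T, RTree.deg]
  | succ d ih =>
    obtain ⟨T, hv, hp, hd⟩ := ih
    have hs := adaSize_succ n d
    let g : Fin n → Fin (n * (2 ^ (d + 1 + 1) - 1)) := fun i => ⟨i.1, by have := i.2; omega⟩
    let g0 : Fin (n * (2 ^ (d + 1) - 1)) → Fin (n * (2 ^ (d + 1 + 1) - 1)) :=
      fun j => ⟨n + j.1, by have := j.2; omega⟩
    let g1 : Fin (n * (2 ^ (d + 1) - 1)) → Fin (n * (2 ^ (d + 1 + 1) - 1)) :=
      fun j => ⟨n + n * (2 ^ (d + 1) - 1) + j.1, by have := j.2; omega⟩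
    refine ⟨.node (MvPolynomial.rename g P) (MvPolynomial.rename g Q)
      (T.reindex g0) (T.reindex g1), ⟨fun x => ?_, T.reindex_valid _ hv, T.reindex_valid _ hv⟩,
      fun w => ?_, ?_⟩
    · rw [evalB_rename]; exact hPQ.1 _
    · have hada : ada f (d + 1) w = if f (fun i => w (g i)) then ada f d (fun j => w (g1 j))
          else ada f d (fun j => w (g0 j)) := rfl
      simp only [RTree.prob, evalB_rename, RTree.reindex_prob]
      have hc := clamp_approx _ _ _ (hPQ.2 (fun i => w (g i)))
      have c0 := clamp_nonneg (evalB P (fun i => w (g i)) / evalB Q (fun i => w (g i)))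
      have c1 := clamp_le_one (evalB P (fun i => w (g i)) / evalB Q (fun i => w (g i)))
      generalize clamp (evalB P (fun i => w (g i)) / evalB Q (fun i => w (g i))) = c at *
      have heq : (((d + 1 : ℕ) : ℝ) + 1) * δ = ((d : ℝ) + 1) * δ + δ := by push_cast; ring
      rw [hada, heq]
      rw [abs_le] at hc
      cases hf : f (fun i => w (g i)) with
      | false =>
        rw [hf] at hc
        simp only [bval, Bool.false_eq_true, if_false] at hc
        exact mix_bound c _ _ _ _ _ c0 c1 (by linarith) (hp _) (T.prob_sub_bval _ _)
      | true =>
        rw [hf] at hc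
        simp only [bval, if_true] at hc
        have := mix_bound (1 - c) _ _ _ _ δ (by linarith) (by linarith) (by linarith)
          (hp (fun j => w (g1 j))) (T.prob_sub_bval (fun j => w (g0 j)) _)
        simp only [if_true]
        convert this using 2
        ring
    · have e : (d + 1 + 1) * max P.totalDegree Q.totalDegree =
        max P.totalDegree Q.totalDegree + (d + 1) * max P.totalDegree Q.totalDegree := by ring
      rw [e]
      exact add_le_add (max_le_max (MvPolynomial.totalDegree_rename_le _ _)
        (MvPolynomial.totalDegree_rename_le _ _))
        (max_le ((T.reindex_deg _).trans hd) ((T.reindex_deg _).trans hd))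

/-- Exact interpolation of a Boolean function by a polynomial. -/
lemma exists_exact {n : ℕ} (f : (Fin n → Bool) → Bool) :
    ∃ P : MvPolynomial (Fin n) ℝ, ∀ x, evalB P x = bval (f x) := by
  refine ⟨∑ y : Fin n → Bool, MvPolynomial.C (bval (f y)) *
    ∏ i, (if y i then MvPolynomial.X i else 1 - MvPolynomial.X i), fun x => ?_⟩
  unfold evalB
  rw [map_sum, Finset.sum_eq_single x]
  · rw [map_mul, map_prod, Finset.prod_eq_one, MvPolynomial.eval_C, mul_one]
    intro i _
    cases h : x i <;> simp [h, bval]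
  · intro y _ hy
    obtain ⟨i, hi⟩ := Function.ne_iff.1 hy
    rw [map_mul, map_prod, Finset.prod_eq_zero (Finset.mem_univ i), mul_zero]
    cases h : x i <;> cases h' : y i <;> simp_all [bval]
  · intro h; exact absurd (Finset.mem_univ _) h

/-- For every `f : {0,1}^n → {0,1}`, depth `d`, and `δ ∈ [0, 1/2)`,
`rtdeg_{(d+1)δ}(Ada(f, d)) ≤ (d+1) · rdeg_δ(f)`. -/
theorem rtdeg_ada_le {n : ℕ} (f : (Fin n → Bool) → Bool) (d : ℕ) (δ : ℝ)
    (hδ0 : 0 ≤ δ) (hδ : δ < 1/2) :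
    rtdeg (((d : ℝ) + 1) * δ) (ada f d) ≤ (d + 1) * rdeg δ f := by
  have hne : {d | ∃ P Q : MvPolynomial (Fin n) ℝ,
      IsRationalApprox δ f P Q ∧ max P.totalDegree Q.totalDegree ≤ d}.Nonempty := by
    obtain ⟨P, hP⟩ := exists_exact f
    refine ⟨_, P, 1, ⟨fun x => ?_, fun x => ?_⟩, le_rfl⟩
    · simp [evalB]
    · rw [hP]; simpa [evalB] using hδ0
  obtain ⟨P, Q, hPQ, hdeg⟩ := Nat.sInf_mem hne
  obtain ⟨T, hv, hp, hd⟩ := ada_tree f δ P Q hPQ d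
  exact Nat.sInf_le ⟨T, hv, hp, hd.trans (Nat.mul_le_mul_left _ hdeg)⟩
end

section
/- There is a constant C such that for every n ≥ 2 and every δ ∈ (0, 1/2), the rational degree of the n-bit AND function satisfies rdeg_δ(AND_n) ≤ C · (log n)² · log(1/δ). -/
lemma rdeg_ANDb_le_one (n : ℕ) (δ : ℝ) (h0 : 0 < δ) : rdeg δ (ANDb n) ≤ 1 := by
  apply Nat.sInf_le
  have hev : ∀ x : Fin n → Bool,
      evalB (MvPolynomial.C δ + ∑ i : Fin n, (MvPolynomial.C (1:ℝ) - MvPolynomial.X i)) x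
        = δ + ∑ i : Fin n, (1 - bval (x i)) := by
    intro x
    simp [evalB]
  have hterm : ∀ b : Bool, 0 ≤ 1 - bval b := by
    intro b; cases b <;> simp [bval]
  have hsum : ∀ x : Fin n → Bool, 0 ≤ ∑ i : Fin n, (1 - bval (x i)) :=
    fun x => Finset.sum_nonneg fun i _ => hterm _
  refine ⟨MvPolynomial.C δ,
    MvPolynomial.C δ + ∑ i : Fin n, (MvPolynomial.C (1:ℝ) - MvPolynomial.X i), ⟨?_, ?_⟩, ?_⟩
  · intro x
    rw [hev]
    have := hsum x
    positivity
  · intro x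
    rw [hev]
    have hC : evalB (MvPolynomial.C δ) x = δ := by simp [evalB]
    rw [hC]
    by_cases hx : ∀ i, x i = true
    · have h1 : ∑ i : Fin n, (1 - bval (x i)) = 0 := by simp [hx, bval]
      have h2 : bval (ANDb n x) = 1 := by simp [ANDb, hx, bval]
      rw [h1, h2, add_zero, div_self h0.ne']
      simpa using h0.le
    · have h2 : bval (ANDb n x) = 0 := by simp [ANDb, hx, bval]
      obtain ⟨i, hi⟩ := not_forall.mp hx
      have h1 : 1 ≤ ∑ i : Fin n, (1 - bval (x i)) := by
        have := Finset.single_le_sum (f := fun i => 1 - bval (x i))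
          (fun i _ => hterm (x i)) (Finset.mem_univ i)
        simpa [bval, hi] using this
      rw [h2, sub_zero, abs_of_nonneg (by positivity)]
      exact div_le_self h0.le (by linarith)
  · refine max_le (by simp) ?_
    refine (MvPolynomial.totalDegree_add _ _).trans (max_le (by simp) ?_)
    refine MvPolynomial.totalDegree_finsetSum_le fun i _ => ?_
    refine (MvPolynomial.totalDegree_sub _ _).trans (max_le (by simp) (by simp))

/-- There is a constant `C` such that for all `n ≥ 2` and `δ ∈ (0, 1/2)`,
`rdeg_δ(AND_n) ≤ C · (log n)² · log(1/δ)`. -/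
theorem rdeg_AND_le : ∃ C : ℝ, ∀ n : ℕ, 2 ≤ n → ∀ δ : ℝ, 0 < δ → δ < 1/2 →
    (rdeg δ (ANDb n) : ℝ) ≤ C * (Real.log n) ^ 2 * Real.log (1 / δ) := by
  have hl : 0 < Real.log 2 := Real.log_pos (by norm_num)
  refine ⟨1 / (Real.log 2) ^ 3, fun n hn δ h0 h1 => ?_⟩
  have hd : (rdeg δ (ANDb n) : ℝ) ≤ 1 := by exact_mod_cast rdeg_ANDb_le_one n δ h0
  have ha : Real.log 2 ≤ Real.log n := Real.log_le_log (by norm_num) (by exact_mod_cast hn)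
  have hb : Real.log 2 ≤ Real.log (1 / δ) := by
    apply Real.log_le_log (by norm_num)
    rw [le_div_iff₀ h0]; linarith
  calc (rdeg δ (ANDb n) : ℝ) ≤ 1 := hd
    _ = 1 / (Real.log 2) ^ 3 * (Real.log 2) ^ 2 * Real.log 2 := by field_simp
    _ ≤ _ := by gcongr
end

section
/- There is a constant C such that for every n ≥ 2, the rational tree degree of the adaptive construction of AND at logarithmic depth satisfies rtdeg_{1/3}(Ada(AND_n, ⌈log₂ n⌉)) ≤ C · (log n)³. -/
/-- The degree-one polynomial `1 - ∑ (1 - x_{e i})`, whose clamp is exactly AND. -/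
noncomputable def andPoly {n m : ℕ} (e : Fin n → Fin m) : MvPolynomial (Fin m) ℝ :=
  1 - ∑ i, (1 - MvPolynomial.X (e i))

lemma andPoly_deg {n m : ℕ} (e : Fin n → Fin m) : (andPoly e).totalDegree ≤ 1 := by
  unfold andPoly
  refine (MvPolynomial.totalDegree_sub _ _).trans (max_le (by simp) ?_)
  refine MvPolynomial.totalDegree_finsetSum_le (fun i _ => ?_)
  exact (MvPolynomial.totalDegree_sub _ _).trans (max_le (by simp) (by simp))

lemma evalB_one {m : ℕ} (x : Fin m → Bool) : evalB 1 x = 1 := by simp [evalB]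

lemma clamp_andPoly {n m : ℕ} (e : Fin n → Fin m) (x : Fin m → Bool) :
    clamp (evalB (andPoly e) x / evalB 1 x) = bval (ANDb n (fun i => x (e i))) := by
  have h : evalB (andPoly e) x = 1 - ∑ i, (1 - bval (x (e i))) := by
    simp [evalB, andPoly]
  rw [evalB_one, div_one, h]
  by_cases hx : ∀ i, x (e i) = true
  · simp [ANDb, hx, bval, clamp]
  · have h1 : (1 : ℝ) ≤ ∑ i, (1 - bval (x (e i))) := by
      push Not at hx
      obtain ⟨i, hi⟩ := hx
      have hi' : (1 : ℝ) - bval (x (e i)) = 1 := by simp [bval, hi]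
      refine hi'.symm.le.trans ?_
      refine Finset.single_le_sum (f := fun i => 1 - bval (x (e i))) (fun j _ => ?_)
        (Finset.mem_univ i)
      unfold bval; split <;> norm_num
    have : ANDb n (fun i => x (e i)) = false := by simp [ANDb, hx]
    rw [this]
    unfold clamp
    rw [min_eq_right (by linarith), max_eq_left (by linarith)]
    simp [bval]

lemma exists_tree {n m : ℕ} (d : ℕ) : ∀ e : Fin (n * (2 ^ (d + 1) - 1)) → Fin m,
    ∃ T : RTree m, T.Valid ∧ (∀ x, T.prob x = bval (ada (ANDb n) d (fun j => x (e j)))) ∧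
      T.deg ≤ d + 1 := by
  induction d with
  | zero =>
    intro e
    refine ⟨.leaf (andPoly fun i : Fin n => e ⟨i.1, by simp⟩) 1, ?_, ?_, ?_⟩
    · intro x; simp [evalB_one]
    · intro x
      rw [RTree.prob, clamp_andPoly]; rfl
    · simpa [RTree.deg] using andPoly_deg _
  | succ d ih =>
    intro e
    have hs := adaSize_succ n d
    obtain ⟨T0, v0, p0, d0⟩ := ih (fun j => e ⟨n + j.1, by have := j.2; omega⟩)
    obtain ⟨T1, v1, p1, d1⟩ := ih (fun j =>
      e ⟨n + n * (2 ^ (d + 1) - 1) + j.1, by have := j.2; omega⟩)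
    refine ⟨.node (andPoly fun i : Fin n => e ⟨i.1, by have := i.2; omega⟩) 1 T0 T1,
      ⟨?_, v0, v1⟩, ?_, ?_⟩
    · intro x; simp [evalB_one]
    · intro x
      rw [RTree.prob, clamp_andPoly, p0, p1]
      conv_rhs => rw [ada]
      beta_reduce
      split_ifs with h
      · rw [h]; simp [bval]
      · rw [Bool.eq_false_iff.mpr h]; simp [bval]
    · have := andPoly_deg (fun i : Fin n => e ⟨i.1, by have := i.2; omega⟩)
      simp only [RTree.deg, MvPolynomial.totalDegree_one]
      omega

/-- There is a constant `C` such that for all `n ≥ 2`,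
`rtdeg_{1/3}(Ada(AND_n, ⌈log₂ n⌉)) ≤ C · (log n)³`. -/
theorem rtdeg_ada_AND_le : ∃ C : ℝ, ∀ n : ℕ, 2 ≤ n →
    (rtdeg (1/3) (ada (ANDb n) (Nat.clog 2 n)) : ℝ) ≤ C * (Real.log n) ^ 3 := by
  refine ⟨20, fun n hn => ?_⟩
  have h1 : rtdeg (1/3) (ada (ANDb n) (Nat.clog 2 n)) ≤ Nat.clog 2 n + 1 := by
    obtain ⟨T, v, p, hd⟩ := exists_tree (n := n) (Nat.clog 2 n) id
    refine Nat.sInf_le ⟨T, v, fun x => ?_, hd⟩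
    rw [p x]; simp
  have h2 : ((Nat.clog 2 n - 1 : ℕ) : ℝ) * Real.log 2 ≤ Real.log n := by
    rw [← Real.log_pow]
    refine Real.log_le_log (by positivity) ?_
    exact_mod_cast (Nat.pow_pred_clog_lt_self (b := 2) (by norm_num) (by omega : 1 < n)).le
  have hc : 0 < Nat.clog 2 n := Nat.clog_pos (by norm_num) hn
  rw [Nat.cast_sub hc] at h2
  have h3 : Real.log 2 ≤ Real.log n := Real.log_le_log (by norm_num) (by exact_mod_cast hn)
  have h4 := Real.log_two_gt_d9
  have h1' : (rtdeg (1/3) (ada (ANDb n) (Nat.clog 2 n)) : ℝ) ≤ Nat.clog 2 n + 1 := by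
    exact_mod_cast h1
  have hc' : (1 : ℝ) ≤ Nat.clog 2 n := by exact_mod_cast hc
  push_cast at h2
  generalize (Nat.clog 2 n : ℝ) = c at *
  generalize Real.log n = L at *
  have h5 : (c - 1) * (0.69 : ℝ) ≤ L := by nlinarith
  have h6 : c + 1 ≤ 5 * L := by linarith
  have h7 : (0.4 : ℝ) ≤ L ^ 2 := by nlinarith
  have h8 : 0.4 * L ≤ L ^ 3 := by nlinarith
  linarith
end
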